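/- Let p, q be polynomials over ℂ with deg q ≤ n, and suppose there exist constants C > 0 and R ≥ R₀ such that |q(z)f(z) − p(z)| ≤ C·|z|^{−(n+1)} for all z ∈ ℂ with |z| ≥ R. Then for every z ∈ ℂ with |z| > R₀ one has the exact remainder representation q(z)·f(z) − p(z) = ∫ q(t)·h(t)/(t − z) dμ(t). -/

import Mathlib

open MeasureTheory Polynomial

/-!
Dividing `q(z) - q(t)` by `t - z` and integrating against `h dμ` shows that the difference between
`q` times the Cauchy transform of `h` and the Cauchy transform of `q h` is a polynomial `P`. Both
`q f - p` and the Cauchy transform of `q h` vanish at infinity, hence so does the polynomial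
`P - p`, which must therefore be zero.
-/

open Filter Bornology Topology

theorem tendsto_zero_cobounded_of_norm_le_div_pow {E F : Type*} [SeminormedAddCommGroup E]
    [SeminormedAddCommGroup F] {u : E → F} {C R : ℝ} {k : ℕ} (hk : k ≠ 0)
    (hu : ∀ z, R ≤ ‖z‖ → ‖u z‖ ≤ C / ‖z‖ ^ k) : Tendsto u (cobounded E) (𝓝 0) := by
  have hbound : Tendsto (fun z : E ↦ C / ‖z‖ ^ k) (cobounded E) (𝓝 0) :=
    ((tendsto_pow_atTop hk).comp tendsto_norm_cobounded_atTop).const_div_atTop C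
  refine squeeze_zero_norm' ?_ hbound
  filter_upwards [tendsto_norm_cobounded_atTop.eventually_ge_atTop R] with z hz using hu z hz

theorem eq_zero_of_tendsto_eval_cobounded {𝕜 : Type*} [NontriviallyNormedField 𝕜] {p : 𝕜[X]}
    (hp : Tendsto (fun z ↦ p.eval z) (cobounded 𝕜) (𝓝 0)) : p = 0 := by
  have hdeg : p.degree ≤ 0 := by
    by_contra! hpos
    exact not_tendsto_nhds_of_tendsto_atTop
      (p.tendsto_norm_atTop hpos tendsto_norm_cobounded_atTop) _ hp.norm
  rw [eq_C_of_degree_le_zero hdeg] at hp ⊢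
  simp only [eval_C, tendsto_const_nhds_iff] at hp
  rw [hp, C_0]

/-- The divided difference `(q(x) - q(y)) / (x - y)`, written out as a polynomial expression in `x`
and `y` so that it also makes sense for `x = y`. The truncated exponent `k - 1 - i` is harmless
because `i < k`. -/
def dividedDifference {A : Type*} [CommSemiring A] (q : A[X]) (x y : A) : A :=
  q.sum fun k a ↦ ∑ i ∈ Finset.range k, a * (x ^ i * y ^ (k - 1 - i))

theorem dividedDifference_mul_sub {A : Type*} [CommRing A] (q : A[X]) (x y : A) :
    dividedDifference q x y * (x - y) = q.eval x - q.eval y := by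
  simp only [dividedDifference, eval_eq_sum, Polynomial.sum_def, Finset.sum_mul,
    ← Finset.sum_sub_distrib]
  refine Finset.sum_congr rfl fun k _ ↦ ?_
  rw [← mul_sub, ← (Commute.all x y).geom_sum₂_mul, Finset.sum_mul, Finset.mul_sum]
  simp only [mul_assoc]

theorem norm_div_sub_le {K : Type*} [NormedDivisionRing K] {c t z : K} {R : ℝ} (ht : ‖t‖ ≤ R)
    (hz : R < ‖z‖) : ‖c / (t - z)‖ ≤ ‖c‖ / (‖z‖ - R) := by
  have hdist : ‖z‖ - R ≤ ‖t - z‖ := by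
    linarith [norm_sub_norm_le z t, norm_sub_rev z t]
  rw [norm_div]
  exact div_le_div_of_nonneg_left (norm_nonneg c) (sub_pos.2 hz) hdist

section CauchyTransform

variable {𝕜 : Type*} [RCLike 𝕜] {μ : Measure 𝕜} {g : 𝕜 → 𝕜} {R : ℝ} {z : 𝕜}

/-- The Cauchy transform `z ↦ ∫ g(t) / (t - z) dμ(t)` of the measure `g dμ`. It takes the junk
value `0` where the integrand is not integrable, so it is meaningful mainly off the support of
`μ`. -/
noncomputable def cauchyTransform (μ : Measure 𝕜) (g : 𝕜 → 𝕜) (z : 𝕜) : 𝕜 :=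
  ∫ t, g t / (t - z) ∂μ

/-- The polynomial of the second kind `z ↦ ∫ (q(z) - q(t)) / (t - z) * g(t) dμ(t)` associated
with `q` and the measure `g dμ`, written out through the moments of `g dμ`. -/
noncomputable def secondKindPolynomial (μ : Measure 𝕜) (g : 𝕜 → 𝕜) (q : 𝕜[X]) : 𝕜[X] :=
  -q.sum fun k a ↦ ∑ i ∈ Finset.range k, C (a * ∫ t, t ^ (k - 1 - i) * g t ∂μ) * X ^ i

theorem integrable_div_sub (hμ : ∀ᵐ t ∂μ, ‖t‖ ≤ R) (hg : Integrable g μ) (hz : R < ‖z‖) :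
    Integrable (fun t ↦ g t / (t - z)) μ := by
  refine (hg.norm.div_const (‖z‖ - R)).mono' ?_ (hμ.mono fun t ht ↦ norm_div_sub_le ht hz)
  exact hg.aestronglyMeasurable.div₀ (by fun_prop)

theorem integrable_eval_mul (hμ : ∀ᵐ t ∂μ, ‖t‖ ≤ R) (hg : Integrable g μ) (q : 𝕜[X]) :
    Integrable (fun t ↦ q.eval t * g t) μ := by
  obtain ⟨B, hB⟩ := (isCompact_closedBall (0 : 𝕜) R).exists_bound_of_continuousOn
    q.continuous.continuousOn
  exact hg.bdd_mul q.continuous.aestronglyMeasurable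
    (hμ.mono fun t ht ↦ hB t (mem_closedBall_zero_iff.2 ht))

theorem norm_cauchyTransform_le (hμ : ∀ᵐ t ∂μ, ‖t‖ ≤ R) (hg : Integrable g μ) (hz : R < ‖z‖) :
    ‖cauchyTransform μ g z‖ ≤ (∫ t, ‖g t‖ ∂μ) / (‖z‖ - R) := by
  rw [← integral_div]
  exact norm_integral_le_of_norm_le (hg.norm.div_const _)
    (hμ.mono fun t ht ↦ norm_div_sub_le ht hz)

theorem tendsto_cauchyTransform_cobounded (hμ : ∀ᵐ t ∂μ, ‖t‖ ≤ R) (hg : Integrable g μ) :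
    Tendsto (cauchyTransform μ g) (cobounded 𝕜) (𝓝 0) := by
  have hbound : Tendsto (fun z : 𝕜 ↦ (∫ t, ‖g t‖ ∂μ) / (‖z‖ - R)) (cobounded 𝕜) (𝓝 0) :=
    (tendsto_atTop_add_const_right _ (-R) tendsto_norm_cobounded_atTop).const_div_atTop _
  refine squeeze_zero_norm' ?_ hbound
  filter_upwards [tendsto_norm_cobounded_atTop.eventually_gt_atTop R] with z hz
    using norm_cauchyTransform_le hμ hg hz

theorem eval_secondKindPolynomial (hμ : ∀ᵐ t ∂μ, ‖t‖ ≤ R) (hg : Integrable g μ) (q : 𝕜[X])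
    (z : 𝕜) :
    (secondKindPolynomial μ g q).eval z = -∫ t, dividedDifference q z t * g t ∂μ := by
  have hmoment (j : ℕ) : Integrable (fun t ↦ t ^ j * g t) μ := by
    simpa using integrable_eval_mul hμ hg (X ^ j)
  have hterm (a : 𝕜) (i j : ℕ) : Integrable (fun t ↦ a * (z ^ i * t ^ j) * g t) μ := by
    simpa only [mul_assoc] using ((hmoment j).const_mul (z ^ i)).const_mul a
  simp only [secondKindPolynomial, dividedDifference, Polynomial.sum_def, eval_neg,
    eval_finsetSum, eval_mul, eval_C, eval_pow, eval_X, Finset.sum_mul]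
  rw [integral_finsetSum _ fun k _ ↦ integrable_finsetSum _ fun i _ ↦ hterm _ _ _]
  congr! 2 with k
  rw [integral_finsetSum _ fun i _ ↦ hterm _ _ _]
  congr! 1 with i
  simp only [mul_assoc, integral_const_mul]
  ring

theorem eval_mul_cauchyTransform_sub_cauchyTransform (hμ : ∀ᵐ t ∂μ, ‖t‖ ≤ R)
    (hg : Integrable g μ) (q : 𝕜[X]) (hz : R < ‖z‖) :
    q.eval z * cauchyTransform μ g z - cauchyTransform μ (fun t ↦ q.eval t * g t) z =
      (secondKindPolynomial μ g q).eval z := by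
  rw [eval_secondKindPolynomial hμ hg, cauchyTransform, cauchyTransform, ← integral_const_mul,
    ← integral_sub ((integrable_div_sub hμ hg hz).const_mul _)
      (integrable_div_sub hμ (integrable_eval_mul hμ hg q) hz), ← integral_neg]
  refine integral_congr_ae (hμ.mono fun t ht ↦ ?_)
  have hsub : t - z ≠ 0 := sub_ne_zero.2 fun htz ↦ (htz ▸ ht).not_gt hz
  have hdiv := dividedDifference_mul_sub q z t
  field_simp
  linear_combination -g t * hdiv

theorem pade_remainder_representation_general (hμ : ∀ᵐ t ∂μ, ‖t‖ ≤ R) (hg : Integrable g μ)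
    {p q : 𝕜[X]}
    (hpq : Tendsto (fun w ↦ q.eval w * cauchyTransform μ g w - p.eval w) (cobounded 𝕜) (𝓝 0))
    (hz : R < ‖z‖) :
    q.eval z * cauchyTransform μ g z - p.eval z =
      cauchyTransform μ (fun t ↦ q.eval t * g t) z := by
  have hdecomp {w : 𝕜} (hw : R < ‖w‖) := eval_mul_cauchyTransform_sub_cauchyTransform hμ hg q hw
  have hlim : Tendsto (fun w ↦ (secondKindPolynomial μ g q - p).eval w) (cobounded 𝕜) (𝓝 0) := by
    have hdiff := hpq.sub (tendsto_cauchyTransform_cobounded hμ (integrable_eval_mul hμ hg q))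
    rw [sub_zero] at hdiff
    refine hdiff.congr' ?_
    filter_upwards [tendsto_norm_cobounded_atTop.eventually_gt_atTop R] with w hw
    rw [eval_sub, ← hdecomp hw, sub_right_comm]
  have hp : secondKindPolynomial μ g q = p :=
    sub_eq_zero.1 (eq_zero_of_tendsto_eval_cobounded hlim)
  rw [← hp, ← hdecomp hz, sub_sub_cancel]

end CauchyTransform

/-- If `(p, q)` satisfies the Padé interpolation bound
`‖q(z)f(z) − p(z)‖ ≤ C·‖z‖^{−(n+1)}` for all large `z`, where `f` is the Cauchy
transform of `h dμ`, then the exact remainder representation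
`q(z)f(z) − p(z) = ∫ q(t)h(t)/(t − z) dμ(t)` holds for all `‖z‖ > R₀`. -/
theorem pade_remainder_representation
    (R₀ : ℝ) (hR₀ : 0 < R₀) (μ : Measure ℂ) [IsFiniteMeasure μ]
    (hμsupp : μ (Metric.closedBall 0 R₀)ᶜ = 0)
    (h : ℂ → ℂ) (hmeas : Measurable h) (M : ℝ) (hbdd : ∀ t : ℂ, ‖h t‖ ≤ M)
    (f : ℂ → ℂ) (hf : ∀ z : ℂ, f z = ∫ t, h t / (t - z) ∂μ)
    (n : ℕ) (p q : Polynomial ℂ) (hq : q.degree ≤ (n : ℕ))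
    (C R : ℝ) (hC : 0 < C) (hR : R₀ ≤ R)
    (herr : ∀ z : ℂ, R ≤ ‖z‖ → ‖q.eval z * f z - p.eval z‖ ≤ C / ‖z‖ ^ (n + 1)) :
    ∀ z : ℂ, R₀ < ‖z‖ →
      q.eval z * f z - p.eval z = ∫ t, q.eval t * h t / (t - z) ∂μ := by
  obtain rfl : f = cauchyTransform μ h := funext hf
  have hμ : ∀ᵐ t ∂μ, t ∈ Metric.closedBall 0 R₀ := hμsupp
  have hint : Integrable h μ := .of_bound hmeas.aestronglyMeasurable M (.of_forall hbdd)
  exact fun z ↦ pade_remainder_representation_general (by simpa using hμ) hint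
    (tendsto_zero_cobounded_of_norm_le_div_pow n.succ_ne_zero herr)
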